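/- arXiv:1112.5500 — 5 statements merged into one kernel-verified Lean document; each statement's English description precedes it below -/
import Mathlib

section
/- Let L > 0, let w : [0,L] × ℝ → ℝ be of class C³, set v(r,t) = r·w(r,t), and suppose that for all r ∈ (0,L) and all t, v satisfies ∂²v/∂t² − ∂²v/∂r² + μv + r·V′(v/r) − J·r = β·∂³v/(∂t∂r²) − γ·∂v/∂t, with the boundary conditions w(L,t) = 0 and ∂w/∂r(L,t) = 0 for all t (corresponding to Dirichlet data u(L,t) = 0 and Neumann data ∇u·n̂ = 0 at radius L). Define E(t) = (π/2)·∫₀ᴸ [½(∂v/∂t)² + ½(∂v/∂r)² + r²·G(v/r)] dr. Then for every t, E is differentiable and E′(t) = −(π/2)·∫₀ᴸ [β·(∂²v/(∂t∂r) − (1/r)·∂v/∂t)² + γ·(∂v/∂t)²] dr; here ∂²v/(∂t∂r) − (1/r)·∂v/∂t = r·∂²w/(∂t∂r), so the integrand is β·r²·(∂²w/(∂t∂r))² + γ·r²·(∂w/∂t)². -/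
open MeasureTheory Set Filter Topology

/-- The closed strip `[0, L] × ℝ` in the `(r, t)`-plane. -/
def radialStrip (L : ℝ) : Set (ℝ × ℝ) := Icc 0 L ×ˢ univ

/-- Directional derivative along `e`, within the strip `[0, L] × ℝ`. -/
noncomputable def stripDeriv (L : ℝ) (e : ℝ × ℝ) (f : ℝ × ℝ → ℝ) (q : ℝ × ℝ) : ℝ :=
  fderivWithin ℝ f (radialStrip L) q e

lemma mk_mem_radialStrip {L r : ℝ} (hr : r ∈ Icc 0 L) (t : ℝ) : (r, t) ∈ radialStrip L :=
  ⟨hr, mem_univ t⟩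

lemma uniqueDiffOn_radialStrip {L : ℝ} (hL : 0 < L) : UniqueDiffOn ℝ (radialStrip L) :=
  (uniqueDiffOn_Icc hL).prod uniqueDiffOn_univ

lemma radialStrip_mem_nhds {L r : ℝ} (hr : r ∈ Ioo 0 L) (t : ℝ) :
    radialStrip L ∈ 𝓝 (r, t) :=
  prod_mem_nhds (Icc_mem_nhds hr.1 hr.2) univ_mem

lemma ContDiffOn.stripDeriv {L : ℝ} (hL : 0 < L) {f : ℝ × ℝ → ℝ} {m n : WithTop ℕ∞}
    (hf : ContDiffOn ℝ n f (radialStrip L)) (hmn : m + 1 ≤ n) (e : ℝ × ℝ) :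
    ContDiffOn ℝ m (stripDeriv L e f) (radialStrip L) :=
  (hf.fderivWithin (uniqueDiffOn_radialStrip hL) hmn).clm_apply contDiffOn_const

lemma hasDerivAt_stripDeriv_time {L : ℝ} {f : ℝ × ℝ → ℝ}
    (hf : DifferentiableOn ℝ f (radialStrip L)) {r : ℝ} (hr : r ∈ Icc 0 L) (t : ℝ) :
    HasDerivAt (fun s => f (r, s)) (stripDeriv L (0, 1) f (r, t)) t := by
  have hq := (hf _ (mk_mem_radialStrip hr t)).hasFDerivWithinAt
  have hc : HasDerivWithinAt (fun s : ℝ => (r, s)) (0, 1) univ t :=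
    ((hasDerivAt_const t r).prodMk (hasDerivAt_id t)).hasDerivWithinAt
  rw [← hasDerivWithinAt_univ]
  exact hq.comp_hasDerivWithinAt t hc fun s _ => mk_mem_radialStrip hr s

lemma hasDerivAt_stripDeriv_radial {L : ℝ} {f : ℝ × ℝ → ℝ}
    (hf : DifferentiableOn ℝ f (radialStrip L)) {r : ℝ} (hr : r ∈ Ioo 0 L) (t : ℝ) :
    HasDerivAt (fun σ => f (σ, t)) (stripDeriv L (1, 0) f (r, t)) r := by
  have hq := (hf _ (mk_mem_radialStrip (Ioo_subset_Icc_self hr) t)).hasFDerivWithinAt.hasFDerivAt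
    (radialStrip_mem_nhds hr t)
  have hc : HasDerivAt (fun σ : ℝ => (σ, t)) (1, 0) r :=
    (hasDerivAt_id r).prodMk (hasDerivAt_const r t)
  exact hq.comp_hasDerivAt r hc

lemma stripDeriv_comm {L : ℝ} (hL : 0 < L) {f : ℝ × ℝ → ℝ}
    (hf : ContDiffOn ℝ 2 f (radialStrip L)) {r : ℝ} (hr : r ∈ Ioo 0 L) (t : ℝ) (d e : ℝ × ℝ) :
    stripDeriv L d (stripDeriv L e f) (r, t) = stripDeriv L e (stripDeriv L d f) (r, t) := by
  have hu := uniqueDiffOn_radialStrip hL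
  have hq : (r, t) ∈ radialStrip L := mk_mem_radialStrip (Ioo_subset_Icc_self hr) t
  have hsymm := (hf _ hq).isSymmSndFDerivWithinAt (by simp) hu
    (subset_closure (mem_interior_iff_mem_nhds.2 (radialStrip_mem_nhds hr t))) hq
  have hd : DifferentiableWithinAt ℝ (fderivWithin ℝ f (radialStrip L)) (radialStrip L) (r, t) :=
    (hf.fderivWithin hu (m := 1) (by norm_num)).differentiableOn (by norm_num) _ hq
  have key (d e : ℝ × ℝ) : stripDeriv L d (stripDeriv L e f) (r, t) =
      fderivWithin ℝ (fderivWithin ℝ f (radialStrip L)) (radialStrip L) (r, t) d e := by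
    simp only [stripDeriv]
    change fderivWithin ℝ (fun q => fderivWithin ℝ f (radialStrip L) q e) _ _ _ = _
    rw [fderivWithin_clm_apply (hu _ hq) hd (differentiableWithinAt_const e)]
    simp
  rw [key, key, hsymm]

lemma ContinuousOn.continuousOn_radialSlice {L : ℝ} {f : ℝ × ℝ → ℝ}
    (hf : ContinuousOn f (radialStrip L)) (t : ℝ) :
    ContinuousOn (fun r => f (r, t)) (Icc 0 L) :=
  hf.comp (by fun_prop) fun _ hr => mk_mem_radialStrip hr t

/-- Differentiation under the integral sign over `[0, L]` for jointly continuous data. -/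
lemma hasDerivAt_integral_radial {L : ℝ} (hL : 0 < L) {f f' : ℝ × ℝ → ℝ}
    (hf : ContinuousOn f (radialStrip L)) (hf' : ContinuousOn f' (radialStrip L))
    (hderiv : ∀ r ∈ Icc 0 L, ∀ t, HasDerivAt (fun s => f (r, s)) (f' (r, t)) t) (t : ℝ) :
    HasDerivAt (fun s => ∫ r in (0 : ℝ)..L, f (r, s)) (∫ r in (0 : ℝ)..L, f' (r, t)) t := by
  obtain ⟨C, hC⟩ := (isCompact_Icc.prod isCompact_Icc).exists_bound_of_continuousOn
    (hf'.mono (prod_mono_right (subset_univ (Icc (t - 1) (t + 1)))))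
  have hinteg {g : ℝ × ℝ → ℝ} (hg : ContinuousOn g (radialStrip L)) (s : ℝ) :
      IntervalIntegrable (fun r => g (r, s)) volume 0 L :=
    (hg.continuousOn_radialSlice s).intervalIntegrable_of_Icc hL.le
  have hsub : uIoc (0 : ℝ) L ⊆ Icc 0 L := by
    rw [uIoc_of_le hL.le]
    exact Ioc_subset_Icc_self
  refine (intervalIntegral.hasDerivAt_integral_of_dominated_loc_of_deriv_le
    (F := fun s r => f (r, s)) (F' := fun s r => f' (r, s)) (bound := fun _ => C)
    (Icc_mem_nhds (sub_one_lt t) (lt_add_one t))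
    (.of_forall fun s => (hinteg hf s).def'.aestronglyMeasurable) (hinteg hf t)
    (hinteg hf' t).def'.aestronglyMeasurable
    (.of_forall fun r hr s hs => hC (r, s) ⟨hsub hr, hs⟩) intervalIntegrable_const
    (.of_forall fun r hr s _ => hderiv r (hsub hr) s)).2


/-- Rate of change of the radial energy
`E(t) = (π/2)∫₀ᴸ[½v_t² + ½v_r² + r²G(v/r)]dr` for the radially reduced
dissipative nonlinear wave equation, with `v(r,t) = r·w(r,t)` and boundary
conditions `w(L,t) = 0`, `∂w/∂r(L,t) = 0`. -/
theorem radial_energy_rate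
    (L μ J β γ : ℝ) (hL : 0 < L) (hβ : 0 ≤ β) (hγ : 0 ≤ γ)
    (V : ℝ → ℝ) (hV : ContDiff ℝ 1 V)
    (w : ℝ → ℝ → ℝ)
    (hw : ContDiffOn ℝ 3 (fun q : ℝ × ℝ => w q.1 q.2) (Set.Icc 0 L ×ˢ Set.univ))
    (heq : ∀ r ∈ Set.Ioo (0:ℝ) L, ∀ t : ℝ,
      deriv (fun s => deriv (fun τ => r * w r τ) s) t
        - deriv (fun σ => deriv (fun σ' => σ' * w σ' t) σ) r
        + μ * (r * w r t)
        + r * deriv V (w r t)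
        - J * r
      = β * deriv (fun s => deriv (fun σ => deriv (fun σ' => σ' * w σ' s) σ) r) t
        - γ * deriv (fun s => r * w r s) t)
    (hbc : ∀ t : ℝ, w L t = 0 ∧ deriv (fun σ => w σ t) L = 0) :
    ∀ t : ℝ,
      HasDerivAt
        (fun s => Real.pi / 2 * ∫ r in (0:ℝ)..L,
          ((1:ℝ)/2 * (deriv (fun τ => r * w r τ) s) ^ 2
            + (1:ℝ)/2 * (deriv (fun σ => σ * w σ s) r) ^ 2
            + r ^ 2 * (μ / 2 * (w r s) ^ 2 + V (w r s) - J * w r s)))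
        (-(Real.pi / 2) * ∫ r in (0:ℝ)..L,
          (β * (deriv (fun s => deriv (fun σ => σ * w σ s) r) t
                - 1 / r * deriv (fun s => r * w r s) t) ^ 2
            + γ * (deriv (fun s => r * w r s) t) ^ 2)) t
      ∧ ∀ r ∈ Set.Ioo (0:ℝ) L,
          deriv (fun s => deriv (fun σ => σ * w σ s) r) t
              - 1 / r * deriv (fun s => r * w r s) t
            = r * deriv (fun s => deriv (fun σ => w σ s) r) t := by
  set F : ℝ × ℝ → ℝ := fun q => w q.1 q.2 with hF
  have cF : ContDiffOn ℝ 3 F (radialStrip L) := hw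
  set Ft := stripDeriv L (0, 1) F
  set Fr := stripDeriv L (1, 0) F with hFr
  set Ftt := stripDeriv L (0, 1) Ft
  set Frt := stripDeriv L (0, 1) Fr with hFrt
  set Frr := stripDeriv L (1, 0) Fr with hFrr
  set Frrt := stripDeriv L (0, 1) Frr with hFrrt
  have cFt : ContDiffOn ℝ 2 Ft (radialStrip L) := cF.stripDeriv hL (by norm_num) _
  have cFr : ContDiffOn ℝ 2 Fr (radialStrip L) := cF.stripDeriv hL (by norm_num) _
  have cFtt : ContDiffOn ℝ 1 Ftt (radialStrip L) := cFt.stripDeriv hL (by norm_num) _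
  have cFrt : ContDiffOn ℝ 1 Frt (radialStrip L) := cFr.stripDeriv hL (by norm_num) _
  have cFrr : ContDiffOn ℝ 1 Frr (radialStrip L) := cFr.stripDeriv hL (by norm_num) _
  have cFrrt : ContDiffOn ℝ 0 Frrt (radialStrip L) := cFrr.stripDeriv hL (by norm_num) _
  have tF {r} (hr : r ∈ Icc 0 L) (t) : HasDerivAt (fun s => w r s) (Ft (r, t)) t :=
    hasDerivAt_stripDeriv_time (cF.differentiableOn (by norm_num)) hr t
  have tFt {r} (hr : r ∈ Icc 0 L) (t) : HasDerivAt (fun s => Ft (r, s)) (Ftt (r, t)) t :=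
    hasDerivAt_stripDeriv_time (cFt.differentiableOn (by norm_num)) hr t
  have tFr {r} (hr : r ∈ Icc 0 L) (t) : HasDerivAt (fun s => Fr (r, s)) (Frt (r, t)) t :=
    hasDerivAt_stripDeriv_time (cFr.differentiableOn (by norm_num)) hr t
  have tFrr {r} (hr : r ∈ Icc 0 L) (t) : HasDerivAt (fun s => Frr (r, s)) (Frrt (r, t)) t :=
    hasDerivAt_stripDeriv_time (cFrr.differentiableOn (by norm_num)) hr t
  have rF {r} (hr : r ∈ Ioo 0 L) (t) : HasDerivAt (fun σ => w σ t) (Fr (r, t)) r :=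
    hasDerivAt_stripDeriv_radial (cF.differentiableOn (by norm_num)) hr t
  have rFr {r} (hr : r ∈ Ioo 0 L) (t) : HasDerivAt (fun σ => Fr (σ, t)) (Frr (r, t)) r :=
    hasDerivAt_stripDeriv_radial (cFr.differentiableOn (by norm_num)) hr t
  have rFt {r} (hr : r ∈ Ioo 0 L) (t) : HasDerivAt (fun σ => Ft (σ, t)) (Frt (r, t)) r := by
    rw [hFrt, hFr, stripDeriv_comm hL (cF.of_le (by norm_num)) hr]
    exact hasDerivAt_stripDeriv_radial (cFt.differentiableOn (by norm_num)) hr t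
  have rFrt {r} (hr : r ∈ Ioo 0 L) (t) : HasDerivAt (fun σ => Frt (σ, t)) (Frrt (r, t)) r := by
    rw [hFrrt, hFrr, stripDeriv_comm hL cFr hr]
    exact hasDerivAt_stripDeriv_radial (cFrt.differentiableOn (by norm_num)) hr t
  -- the partial derivatives of `v = r * w` in terms of those of `w`
  have vt {r} (hr : r ∈ Icc 0 L) (t) : deriv (fun s => r * w r s) t = r * Ft (r, t) :=
    ((tF hr t).const_mul r).deriv
  have vtt {r} (hr : r ∈ Icc 0 L) (t) :
      deriv (fun s => deriv (fun τ => r * w r τ) s) t = r * Ftt (r, t) := by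
    simp only [vt hr]
    exact ((tFt hr t).const_mul r).deriv
  have vr {r} (hr : r ∈ Ioo 0 L) (t) :
      deriv (fun σ => σ * w σ t) r = w r t + r * Fr (r, t) := by
    simpa using ((hasDerivAt_id' r).fun_mul (rF hr t)).deriv
  have vrr {r} (hr : r ∈ Ioo 0 L) (t) :
      deriv (fun σ => deriv (fun σ' => σ' * w σ' t) σ) r = 2 * Fr (r, t) + r * Frr (r, t) := by
    have hev : (fun σ => deriv (fun σ' => σ' * w σ' t) σ) =ᶠ[𝓝 r]
        fun σ => w σ t + σ * Fr (σ, t) := by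
      filter_upwards [Ioo_mem_nhds hr.1 hr.2] with σ hσ using vr hσ t
    rw [hev.deriv_eq, ((rF hr t).fun_add ((hasDerivAt_id' r).fun_mul (rFr hr t))).deriv]
    ring
  have vrt {r} (hr : r ∈ Ioo 0 L) (t) :
      deriv (fun s => deriv (fun σ => σ * w σ s) r) t = Ft (r, t) + r * Frt (r, t) := by
    have hr' := Ioo_subset_Icc_self hr
    simp only [vr hr]
    exact ((tF hr' t).fun_add ((tFr hr' t).const_mul r)).deriv
  have vrrt {r} (hr : r ∈ Ioo 0 L) (t) :
      deriv (fun s => deriv (fun σ => deriv (fun σ' => σ' * w σ' s) σ) r) t =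
        2 * Frt (r, t) + r * Frrt (r, t) := by
    have hr' := Ioo_subset_Icc_self hr
    simp only [vrr hr]
    exact (((tFr hr' t).const_mul 2).fun_add ((tFrr hr' t).const_mul r)).deriv
  have wrt {r} (hr : r ∈ Ioo 0 L) (t) :
      deriv (fun s => deriv (fun σ => w σ s) r) t = Frt (r, t) := by
    simp only [(rF hr _).deriv]
    exact (tFr (Ioo_subset_Icc_self hr) t).deriv
  have hdamp {r} (hr : r ∈ Ioo 0 L) (t) :
      deriv (fun s => deriv (fun σ => σ * w σ s) r) t - 1 / r * deriv (fun s => r * w r s) t =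
        r * Frt (r, t) := by
    have hr0 : r ≠ 0 := hr.1.ne'
    rw [vrt hr, vt (Ioo_subset_Icc_self hr)]
    field_simp
    ring
  intro t
  refine ⟨?_, fun r hr => by rw [hdamp hr, wrt hr]⟩
  have kF := cF.continuousOn
  have kFt := cFt.continuousOn
  have kFr := cFr.continuousOn
  have kFtt := cFtt.continuousOn
  have kFrt := cFrt.continuousOn
  have kFrr := cFrr.continuousOn
  have kFrrt := cFrrt.continuousOn
  have kV := hV.continuous
  have kV' := hV.continuous_deriv le_rfl
  have hE := hasDerivAt_integral_radial hL
    (f := fun q => 1 / 2 * (q.1 * Ft q) ^ 2 + 1 / 2 * (F q + q.1 * Fr q) ^ 2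
      + q.1 ^ 2 * (μ / 2 * F q ^ 2 + V (F q) - J * F q))
    (f' := fun q => q.1 ^ 2 * Ft q * Ftt q + (F q + q.1 * Fr q) * (Ft q + q.1 * Frt q)
      + q.1 ^ 2 * ((μ * F q + deriv V (F q) - J) * Ft q))
    (by fun_prop) (by fun_prop)
    (fun r hr t => by
      have hVd : HasDerivAt (fun s => V (w r s)) (deriv V (w r t) * Ft (r, t)) t :=
        ((hV.differentiable one_ne_zero _).hasDerivAt).comp t (tF hr t)
      refine HasDerivAt.congr_deriv ((((((tFt hr t).const_mul r).fun_pow 2).const_mul (1 / 2)).fun_add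
        ((((tF hr t).fun_add ((tFr hr t).const_mul r)).fun_pow 2).const_mul (1 / 2))).fun_add
        ((((((tF hr t).fun_pow 2).const_mul (μ / 2)).fun_add hVd).fun_sub
          ((tF hr t).const_mul J)).const_mul (r ^ 2))) ?_
      simp only [hF]
      push_cast
      ring) t
  -- the radial derivative of the boundary flux `v_t v_r + β r² w_t w_rt` integrates to zero
  have hfluxcont : ContinuousOn (fun q : ℝ × ℝ => (Ft q + q.1 * Frt q) * (F q + q.1 * Fr q)
      + q.1 * Ft q * (2 * Fr q + q.1 * Frr q)
      + β * (2 * q.1 * (Ft q * Frt q) + q.1 ^ 2 * (Frt q ^ 2 + Ft q * Frrt q)))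
      (radialStrip L) := by fun_prop
  have hflux : ∫ r in (0 : ℝ)..L, ((Ft (r, t) + r * Frt (r, t)) * (w r t + r * Fr (r, t))
      + r * Ft (r, t) * (2 * Fr (r, t) + r * Frr (r, t))
      + β * (2 * r * (Ft (r, t) * Frt (r, t))
        + r ^ 2 * (Frt (r, t) ^ 2 + Ft (r, t) * Frrt (r, t)))) = 0 := by
    have hFtL : Ft (L, t) = 0 := by
      have h := tF (right_mem_Icc.2 hL.le) t
      simp only [(hbc _).1] at h
      exact h.unique (hasDerivAt_const t 0)
    have hcont : ContinuousOn (fun q : ℝ × ℝ => q.1 * Ft q * (F q + q.1 * Fr q)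
      + β * (q.1 ^ 2 * (Ft q * Frt q))) (radialStrip L) := by fun_prop
    rw [intervalIntegral.integral_eq_sub_of_hasDerivAt_of_le hL.le
      (hcont.continuousOn_radialSlice t) (fun r hr => ?_)
      ((hfluxcont.continuousOn_radialSlice t).intervalIntegrable_of_Icc hL.le)]
    · simp [hFtL]
    · refine HasDerivAt.congr_deriv ((((hasDerivAt_id' r).fun_mul (rFt hr t)).fun_mul
        ((rF hr t).fun_add ((hasDerivAt_id' r).fun_mul (rFr hr t)))).fun_add
        ((((hasDerivAt_id' r).fun_pow 2).fun_mul ((rFt hr t).fun_mul (rFrt hr t))).const_mul β)) ?_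
      simp only [hF]
      push_cast
      ring
  have hdampcont : ContinuousOn (fun q : ℝ × ℝ => β * (q.1 * Frt q) ^ 2 + γ * (q.1 * Ft q) ^ 2)
      (radialStrip L) := by fun_prop
  have hrate : ∫ r in (0 : ℝ)..L, (r ^ 2 * Ft (r, t) * Ftt (r, t)
      + (w r t + r * Fr (r, t)) * (Ft (r, t) + r * Frt (r, t))
      + r ^ 2 * ((μ * w r t + deriv V (w r t) - J) * Ft (r, t))) =
      -∫ r in (0 : ℝ)..L, (β * (r * Frt (r, t)) ^ 2 + γ * (r * Ft (r, t)) ^ 2) := by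
    refine Eq.trans ?_ ((intervalIntegral.integral_sub
      ((hfluxcont.continuousOn_radialSlice t).intervalIntegrable_of_Icc hL.le)
      ((hdampcont.continuousOn_radialSlice t).intervalIntegrable_of_Icc hL.le)).trans
      ((congrArg (· - _) hflux).trans (zero_sub _)))
    refine intervalIntegral.integral_congr_Ioo_of_le hL.le fun r hr => ?_
    have hpde := heq r hr t
    rw [vtt (Ioo_subset_Icc_self hr), vrr hr, vrrt hr, vt (Ioo_subset_Icc_self hr)] at hpde
    simp only [hF]
    linear_combination (r * Ft (r, t)) * hpde
  refine ((hE.const_mul (Real.pi / 2)).congr_of_eventuallyEq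
    (.of_forall fun s => ?_)).congr_deriv ?_
  · refine congrArg _ ?_
    refine intervalIntegral.integral_congr_Ioo_of_le hL.le fun r hr => ?_
    simp only [vt (Ioo_subset_Icc_self hr), vr hr, hF]
  · rw [neg_mul, ← mul_neg]
    refine congrArg _ (hrate.trans (congrArg Neg.neg ?_))
    refine intervalIntegral.integral_congr_Ioo_of_le hL.le fun r hr => ?_
    rw [hdamp hr, vt (Ioo_subset_Icc_self hr)]
end

section
/- Let N ≥ 1 and for each triple of indices m,n,p ∈ {0,1,…,N+1} let u_{m,n,p} : ℝ → ℝ be twice differentiable. Suppose that for all m,n,p ∈ {1,…,N} the lattice equation ü_{m,n,p} − c²·∇²u_{m,n,p} + μ·u_{m,n,p} + V′(u_{m,n,p}) − J = β·∇²u̇_{m,n,p} − γ·u̇_{m,n,p} holds for all t, and that the discrete Neumann conditions u_{N+1,n,p}(t) = u_{N,n,p}(t), u_{m,N+1,p}(t) = u_{m,N,p}(t), u_{m,n,N+1}(t) = u_{m,n,N}(t) hold for all m,n,p ∈ {1,…,N} and all t. Then the total energy E(t) is differentiable and dE/dt = −c²·∑_{i,j=1}^N [(δₓu_{0,i,j})·u̇_{0,i,j}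 + (δᵧu_{i,0,j})·u̇_{i,0,j} + (δ_zu_{i,j,0})·u̇_{i,j,0}] − β·{∑_{m,n,p=1}^N [(δₓu̇_{m−1,n,p})² + (δᵧu̇_{m,n−1,p})² + (δ_zu̇_{m,n,p−1})²] + ∑_{i,j=1}^N [(δₓu̇_{0,i,j})·u̇_{0,i,j} + (δᵧu̇_{i,0,j})·u̇_{i,0,j} + (δ_zu̇_{i,j,0})·u̇_{i,j,0}]} − γ·∑_{m,n,p=1}^N (u̇_{m,n,p})². -/
noncomputable section

open Finset

/-- Discrete Laplacian on the three-dimensional lattice. -/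
def dLap (u : ℤ → ℤ → ℤ → ℝ → ℝ) (m n p : ℤ) (t : ℝ) : ℝ :=
  u (m + 1) n p t + u (m - 1) n p t + u m (n + 1) p t + u m (n - 1) p t
    + u m n (p + 1) t + u m n (p - 1) t - 6 * u m n p t

/-- Time derivative of the node function. -/
def ud (u : ℤ → ℤ → ℤ → ℝ → ℝ) (m n p : ℤ) (t : ℝ) : ℝ := deriv (u m n p) t

/-- Hamiltonian of the lattice node at `(m,n,p)`. -/
def nodeH (c μ J : ℝ) (V : ℝ → ℝ) (u : ℤ → ℤ → ℤ → ℝ → ℝ) (m n p : ℤ) (t : ℝ) : ℝ :=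
  (1:ℝ)/2 * ((ud u m n p t) ^ 2 + c ^ 2 * (u (m + 1) n p t - u m n p t) ^ 2
      + c ^ 2 * (u m (n + 1) p t - u m n p t) ^ 2
      + c ^ 2 * (u m n (p + 1) t - u m n p t) ^ 2
      + μ * (u m n p t) ^ 2)
    + V (u m n p t) - J * u m n p t

/-- Total energy of the lattice system, including the coupling potential of the
nodes adjacent to the driving boundary. -/
def totE (N : ℕ) (c μ J : ℝ) (V : ℝ → ℝ) (u : ℤ → ℤ → ℤ → ℝ → ℝ) (t : ℝ) : ℝ :=
  (∑ m ∈ Icc (1:ℤ) (N:ℤ), ∑ n ∈ Icc (1:ℤ) (N:ℤ), ∑ p ∈ Icc (1:ℤ) (N:ℤ),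
      nodeH c μ J V u m n p t)
    + c ^ 2 / 2 *
      ((∑ n ∈ Icc (1:ℤ) (N:ℤ), ∑ p ∈ Icc (1:ℤ) (N:ℤ), (u 1 n p t - u 0 n p t) ^ 2)
        + (∑ m ∈ Icc (1:ℤ) (N:ℤ), ∑ p ∈ Icc (1:ℤ) (N:ℤ), (u m 1 p t - u m 0 p t) ^ 2)
        + (∑ m ∈ Icc (1:ℤ) (N:ℤ), ∑ n ∈ Icc (1:ℤ) (N:ℤ), (u m n 1 t - u m n 0 t) ^ 2))

/-- Telescoping sum over an integer interval. -/
theorem sum_Icc_int_sub_pred (N : ℕ) (f : ℤ → ℝ) :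
    ∑ m ∈ Icc (1:ℤ) (N:ℤ), (f m - f (m - 1)) = f N - f 0 := by
  induction N with
  | zero => simp
  | succ k ih =>
    have h : Icc (1:ℤ) ((k + 1 : ℕ) : ℤ) = insert ((k:ℤ) + 1) (Icc (1:ℤ) (k:ℤ)) := by
      ext x
      simp only [mem_Icc, mem_insert]
      omega
    rw [h, sum_insert (by simp), ih]
    push_cast
    rw [add_sub_cancel_right]
    ring

/-- Telescoping of a divergence summed over a cube, when the flux `(f, g, h)` vanishes on the
far faces. -/
theorem sum_cube_divergence (N : ℕ) (f g h : ℤ → ℤ → ℤ → ℝ)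
    (hf : ∀ i ∈ Icc (1:ℤ) (N:ℤ), ∀ j ∈ Icc (1:ℤ) (N:ℤ), f N i j = 0)
    (hg : ∀ i ∈ Icc (1:ℤ) (N:ℤ), ∀ j ∈ Icc (1:ℤ) (N:ℤ), g i N j = 0)
    (hh : ∀ i ∈ Icc (1:ℤ) (N:ℤ), ∀ j ∈ Icc (1:ℤ) (N:ℤ), h i j N = 0) :
    ∑ m ∈ Icc (1:ℤ) (N:ℤ), ∑ n ∈ Icc (1:ℤ) (N:ℤ), ∑ p ∈ Icc (1:ℤ) (N:ℤ),
        ((f m n p - f (m - 1) n p) + (g m n p - g m (n - 1) p) + (h m n p - h m n (p - 1)))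
      = -∑ i ∈ Icc (1:ℤ) (N:ℤ), ∑ j ∈ Icc (1:ℤ) (N:ℤ), (f 0 i j + g i 0 j + h i j 0) := by
  have ef : ∑ m ∈ Icc (1:ℤ) (N:ℤ), ∑ n ∈ Icc (1:ℤ) (N:ℤ), ∑ p ∈ Icc (1:ℤ) (N:ℤ),
      (f m n p - f (m - 1) n p)
        = ∑ i ∈ Icc (1:ℤ) (N:ℤ), ∑ j ∈ Icc (1:ℤ) (N:ℤ), -f 0 i j := by
    rw [sum_comm]
    refine sum_congr rfl fun i hi => ?_
    rw [sum_comm]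
    refine sum_congr rfl fun j hj => ?_
    rw [sum_Icc_int_sub_pred N (fun m => f m i j), hf i hi j hj, zero_sub]
  have eg : ∑ m ∈ Icc (1:ℤ) (N:ℤ), ∑ n ∈ Icc (1:ℤ) (N:ℤ), ∑ p ∈ Icc (1:ℤ) (N:ℤ),
      (g m n p - g m (n - 1) p)
        = ∑ i ∈ Icc (1:ℤ) (N:ℤ), ∑ j ∈ Icc (1:ℤ) (N:ℤ), -g i 0 j := by
    refine sum_congr rfl fun i hi => ?_
    rw [sum_comm]
    refine sum_congr rfl fun j hj => ?_
    rw [sum_Icc_int_sub_pred N (fun n => g i n j), hg i hi j hj, zero_sub]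
  have eh : ∑ m ∈ Icc (1:ℤ) (N:ℤ), ∑ n ∈ Icc (1:ℤ) (N:ℤ), ∑ p ∈ Icc (1:ℤ) (N:ℤ),
      (h m n p - h m n (p - 1))
        = ∑ i ∈ Icc (1:ℤ) (N:ℤ), ∑ j ∈ Icc (1:ℤ) (N:ℤ), -h i j 0 := by
    refine sum_congr rfl fun i hi => sum_congr rfl fun j hj => ?_
    rw [sum_Icc_int_sub_pred N (fun p => h i j p), hh i hi j hj, zero_sub]
  simp_rw [sum_add_distrib]
  rw [ef, eg, eh]
  simp only [sum_neg_distrib]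
  ring

/-- Rate of change of the Hamiltonian of a single node. -/
theorem hasDerivAt_nodeH {c μ J : ℝ} {V : ℝ → ℝ} {u : ℤ → ℤ → ℤ → ℝ → ℝ} {m n p : ℤ} {t : ℝ}
    (hV : Differentiable ℝ V) (h : DifferentiableAt ℝ (u m n p) t)
    (hacc : DifferentiableAt ℝ (deriv (u m n p)) t)
    (hx : DifferentiableAt ℝ (u (m + 1) n p) t) (hy : DifferentiableAt ℝ (u m (n + 1) p) t)
    (hz : DifferentiableAt ℝ (u m n (p + 1)) t) :
    HasDerivAt (nodeH c μ J V u m n p)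
      ((deriv (deriv (u m n p)) t + μ * u m n p t + deriv V (u m n p t) - J) * ud u m n p t
        + c ^ 2 * ((u (m + 1) n p t - u m n p t) * (ud u (m + 1) n p t - ud u m n p t)
          + (u m (n + 1) p t - u m n p t) * (ud u m (n + 1) p t - ud u m n p t)
          + (u m n (p + 1) t - u m n p t) * (ud u m n (p + 1) t - ud u m n p t))) t := by
  have hVu := (hV (u m n p t)).hasDerivAt.comp t h.hasDerivAt
  have key := ((((((hacc.hasDerivAt.pow 2).add
    (((hx.hasDerivAt.sub h.hasDerivAt).pow 2).const_mul (c ^ 2))).add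
    (((hy.hasDerivAt.sub h.hasDerivAt).pow 2).const_mul (c ^ 2))).add
    (((hz.hasDerivAt.sub h.hasDerivAt).pow 2).const_mul (c ^ 2))).add
    ((h.hasDerivAt.pow 2).const_mul μ)).const_mul ((1:ℝ) / 2)).add hVu |>.sub
    (h.hasDerivAt.const_mul J)
  refine key.congr_deriv ?_
  simp only [ud, Pi.sub_apply]
  push_cast
  ring

/-- Rate of change of the squared difference of two functions. -/
theorem hasDerivAt_sub_sq {f g : ℝ → ℝ} {t : ℝ} (hf : DifferentiableAt ℝ f t)
    (hg : DifferentiableAt ℝ g t) :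
    HasDerivAt (fun s => (f s - g s) ^ 2)
      (2 * ((f t - g t) * deriv f t - (f t - g t) * deriv g t)) t := by
  refine ((hf.hasDerivAt.sub hg.hasDerivAt).pow 2).congr_deriv ?_
  simp only [Pi.sub_apply]
  push_cast
  ring

/-- Rate of change of the total energy of the damped lattice with discrete
Neumann conditions on the far boundaries. -/
theorem lattice_energy_rate
    (N : ℕ) (hN : 1 ≤ N) (c μ J β γ : ℝ) (hc : 0 < c) (hβ : 0 ≤ β) (hγ : 0 ≤ γ)
    (V : ℝ → ℝ) (hV : ContDiff ℝ 1 V)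
    (u : ℤ → ℤ → ℤ → ℝ → ℝ)
    (hdiff : ∀ m n p : ℤ, m ∈ Icc (0:ℤ) (N + 1) → n ∈ Icc (0:ℤ) (N + 1) →
      p ∈ Icc (0:ℤ) (N + 1) → ∀ t : ℝ,
        DifferentiableAt ℝ (u m n p) t ∧ DifferentiableAt ℝ (deriv (u m n p)) t)
    (heq : ∀ m n p : ℤ, m ∈ Icc (1:ℤ) (N:ℤ) → n ∈ Icc (1:ℤ) (N:ℤ) →
      p ∈ Icc (1:ℤ) (N:ℤ) → ∀ t : ℝ,
        deriv (deriv (u m n p)) t - c ^ 2 * dLap u m n p t + μ * u m n p t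
            + deriv V (u m n p t) - J
          = β * dLap (fun i j l s => deriv (u i j l) s) m n p t
            - γ * deriv (u m n p) t)
    (hneum : ∀ m n p : ℤ, m ∈ Icc (1:ℤ) (N:ℤ) → n ∈ Icc (1:ℤ) (N:ℤ) →
      p ∈ Icc (1:ℤ) (N:ℤ) → ∀ t : ℝ,
        u ((N:ℤ) + 1) n p t = u (N:ℤ) n p t
          ∧ u m ((N:ℤ) + 1) p t = u m (N:ℤ) p t
          ∧ u m n ((N:ℤ) + 1) t = u m n (N:ℤ) t) :
    ∀ t : ℝ,
      HasDerivAt (totE N c μ J V u)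
        (-c ^ 2 * (∑ i ∈ Icc (1:ℤ) (N:ℤ), ∑ j ∈ Icc (1:ℤ) (N:ℤ),
            ((u 1 i j t - u 0 i j t) * ud u 0 i j t
              + (u i 1 j t - u i 0 j t) * ud u i 0 j t
              + (u i j 1 t - u i j 0 t) * ud u i j 0 t))
          - β * ((∑ m ∈ Icc (1:ℤ) (N:ℤ), ∑ n ∈ Icc (1:ℤ) (N:ℤ), ∑ p ∈ Icc (1:ℤ) (N:ℤ),
                ((ud u m n p t - ud u (m - 1) n p t) ^ 2
                  + (ud u m n p t - ud u m (n - 1) p t) ^ 2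
                  + (ud u m n p t - ud u m n (p - 1) t) ^ 2))
              + (∑ i ∈ Icc (1:ℤ) (N:ℤ), ∑ j ∈ Icc (1:ℤ) (N:ℤ),
                ((ud u 1 i j t - ud u 0 i j t) * ud u 0 i j t
                  + (ud u i 1 j t - ud u i 0 j t) * ud u i 0 j t
                  + (ud u i j 1 t - ud u i j 0 t) * ud u i j 0 t)))
          - γ * ∑ m ∈ Icc (1:ℤ) (N:ℤ), ∑ n ∈ Icc (1:ℤ) (N:ℤ), ∑ p ∈ Icc (1:ℤ) (N:ℤ),
              (ud u m n p t) ^ 2)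
        t := by
  intro t
  have hb : ∀ {i : ℤ}, i ∈ Icc (1:ℤ) (N:ℤ) → i ∈ Icc (0:ℤ) (N + 1) ∧
      i + 1 ∈ Icc (0:ℤ) (N + 1) := by
    intro i hi
    simp only [mem_Icc] at hi ⊢
    omega
  have h0 : (0:ℤ) ∈ Icc (0:ℤ) (N + 1) := by simp only [mem_Icc]; omega
  have h1 : (1:ℤ) ∈ Icc (0:ℤ) (N + 1) := by simp only [mem_Icc]; omega
  have hNN : (1:ℤ) ∈ Icc (1:ℤ) (N:ℤ) := by simp only [mem_Icc]; omega
  have hd : ∀ {m n p : ℤ}, m ∈ Icc (0:ℤ) (N + 1) → n ∈ Icc (0:ℤ) (N + 1) →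
      p ∈ Icc (0:ℤ) (N + 1) → DifferentiableAt ℝ (u m n p) t :=
    fun hm hn hp => (hdiff _ _ _ hm hn hp t).1
  have neumX : ∀ i ∈ Icc (1:ℤ) (N:ℤ), ∀ j ∈ Icc (1:ℤ) (N:ℤ), u ((N:ℤ) + 1) i j = u N i j :=
    fun i hi j hj => funext fun s => (hneum 1 i j hNN hi hj s).1
  have neumY : ∀ i ∈ Icc (1:ℤ) (N:ℤ), ∀ j ∈ Icc (1:ℤ) (N:ℤ), u i ((N:ℤ) + 1) j = u i N j :=
    fun i hi j hj => funext fun s => (hneum i 1 j hi hNN hj s).2.1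
  have neumZ : ∀ i ∈ Icc (1:ℤ) (N:ℤ), ∀ j ∈ Icc (1:ℤ) (N:ℤ), u i j ((N:ℤ) + 1) = u i j N :=
    fun i hi j hj => funext fun s => (hneum i j 1 hi hj hNN s).2.2
  -- Flux of the conservative coupling.
  have fluxU := sum_cube_divergence N
    (fun m n p => (u (m + 1) n p t - u m n p t) * ud u (m + 1) n p t)
    (fun m n p => (u m (n + 1) p t - u m n p t) * ud u m (n + 1) p t)
    (fun m n p => (u m n (p + 1) t - u m n p t) * ud u m n (p + 1) t)
    (fun i hi j hj => by simp [neumX i hi j hj]) (fun i hi j hj => by simp [neumY i hi j hj])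
    (fun i hi j hj => by simp [neumZ i hi j hj])
  -- Flux of the damping coupling.
  have fluxV := sum_cube_divergence N
    (fun m n p => (ud u (m + 1) n p t - ud u m n p t) * ud u m n p t)
    (fun m n p => (ud u m (n + 1) p t - ud u m n p t) * ud u m n p t)
    (fun m n p => (ud u m n (p + 1) t - ud u m n p t) * ud u m n p t)
    (fun i hi j hj => by simp [ud, neumX i hi j hj]) (fun i hi j hj => by simp [ud, neumY i hi j hj])
    (fun i hi j hj => by simp [ud, neumZ i hi j hj])
  simp only [sub_add_cancel, zero_add] at fluxU fluxV
  have key := (HasDerivAt.fun_sum fun m (hm : m ∈ Icc (1:ℤ) (N:ℤ)) =>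
      HasDerivAt.fun_sum fun n (hn : n ∈ Icc (1:ℤ) (N:ℤ)) =>
      HasDerivAt.fun_sum fun p (hp : p ∈ Icc (1:ℤ) (N:ℤ)) =>
        hasDerivAt_nodeH (c := c) (μ := μ) (J := J) (hV.differentiable one_ne_zero)
          (hd (hb hm).1 (hb hn).1 (hb hp).1)
          (hdiff m n p (hb hm).1 (hb hn).1 (hb hp).1 t).2
          (hd (hb hm).2 (hb hn).1 (hb hp).1) (hd (hb hm).1 (hb hn).2 (hb hp).1)
          (hd (hb hm).1 (hb hn).1 (hb hp).2)).add
    ((((HasDerivAt.fun_sum fun i (hi : i ∈ Icc (1:ℤ) (N:ℤ)) =>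
        HasDerivAt.fun_sum fun j (hj : j ∈ Icc (1:ℤ) (N:ℤ)) =>
          hasDerivAt_sub_sq (hd h1 (hb hi).1 (hb hj).1) (hd h0 (hb hi).1 (hb hj).1)).add
      (HasDerivAt.fun_sum fun i (hi : i ∈ Icc (1:ℤ) (N:ℤ)) =>
        HasDerivAt.fun_sum fun j (hj : j ∈ Icc (1:ℤ) (N:ℤ)) =>
          hasDerivAt_sub_sq (hd (hb hi).1 h1 (hb hj).1) (hd (hb hi).1 h0 (hb hj).1))).add
      (HasDerivAt.fun_sum fun i (hi : i ∈ Icc (1:ℤ) (N:ℤ)) =>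
        HasDerivAt.fun_sum fun j (hj : j ∈ Icc (1:ℤ) (N:ℤ)) =>
          hasDerivAt_sub_sq (hd (hb hi).1 (hb hj).1 h1)
            (hd (hb hi).1 (hb hj).1 h0))).const_mul (c ^ 2 / 2))
  refine key.congr_deriv ?_
  have hnode : ∀ m ∈ Icc (1:ℤ) (N:ℤ), ∀ n ∈ Icc (1:ℤ) (N:ℤ), ∀ p ∈ Icc (1:ℤ) (N:ℤ),
      (deriv (deriv (u m n p)) t + μ * u m n p t + deriv V (u m n p t) - J) * ud u m n p t
        + c ^ 2 * ((u (m + 1) n p t - u m n p t) * (ud u (m + 1) n p t - ud u m n p t)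
          + (u m (n + 1) p t - u m n p t) * (ud u m (n + 1) p t - ud u m n p t)
          + (u m n (p + 1) t - u m n p t) * (ud u m n (p + 1) t - ud u m n p t))
      = c ^ 2 *
          ((u (m + 1) n p t - u m n p t) * ud u (m + 1) n p t
              - (u m n p t - u (m - 1) n p t) * ud u m n p t
            + ((u m (n + 1) p t - u m n p t) * ud u m (n + 1) p t
              - (u m n p t - u m (n - 1) p t) * ud u m n p t)
            + ((u m n (p + 1) t - u m n p t) * ud u m n (p + 1) t
              - (u m n p t - u m n (p - 1) t) * ud u m n p t))
        + β * ((ud u (m + 1) n p t - ud u m n p t) * ud u m n p t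
              - (ud u m n p t - ud u (m - 1) n p t) * ud u (m - 1) n p t
            + ((ud u m (n + 1) p t - ud u m n p t) * ud u m n p t
              - (ud u m n p t - ud u m (n - 1) p t) * ud u m (n - 1) p t)
            + ((ud u m n (p + 1) t - ud u m n p t) * ud u m n p t
              - (ud u m n p t - ud u m n (p - 1) t) * ud u m n (p - 1) t))
        - β * ((ud u m n p t - ud u (m - 1) n p t) ^ 2
            + (ud u m n p t - ud u m (n - 1) p t) ^ 2
            + (ud u m n p t - ud u m n (p - 1) t) ^ 2)
        - γ * (ud u m n p t) ^ 2 := by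
    intro m hm n hn p hp
    have e := heq m n p hm hn hp t
    simp only [dLap] at e
    simp only [ud]
    linear_combination deriv (u m n p) t * e
  rw [sum_congr rfl fun m hm => sum_congr rfl fun n hn => sum_congr rfl fun p hp =>
    hnode m hm n hn p hp]
  have hsplit : ∀ F G H K : ℤ → ℤ → ℤ → ℝ,
      ∑ m ∈ Icc (1:ℤ) (N:ℤ), ∑ n ∈ Icc (1:ℤ) (N:ℤ), ∑ p ∈ Icc (1:ℤ) (N:ℤ),
        (c ^ 2 * F m n p + β * G m n p - β * H m n p - γ * K m n p)
      = c ^ 2 * (∑ m ∈ Icc (1:ℤ) (N:ℤ), ∑ n ∈ Icc (1:ℤ) (N:ℤ), ∑ p ∈ Icc (1:ℤ) (N:ℤ), F m n p)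
        + β * (∑ m ∈ Icc (1:ℤ) (N:ℤ), ∑ n ∈ Icc (1:ℤ) (N:ℤ), ∑ p ∈ Icc (1:ℤ) (N:ℤ), G m n p)
        - β * (∑ m ∈ Icc (1:ℤ) (N:ℤ), ∑ n ∈ Icc (1:ℤ) (N:ℤ), ∑ p ∈ Icc (1:ℤ) (N:ℤ), H m n p)
        - γ * (∑ m ∈ Icc (1:ℤ) (N:ℤ), ∑ n ∈ Icc (1:ℤ) (N:ℤ), ∑ p ∈ Icc (1:ℤ) (N:ℤ), K m n p) := by
    intro F G H K
    simp only [sum_add_distrib, sum_sub_distrib, mul_sum]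
  rw [hsplit, fluxU, fluxV]
  simp only [ud, sum_add_distrib, sum_sub_distrib, ← mul_sum]
  ring

end
end

section
/- Let N ≥ 1, fix interior indices m,n,p ∈ {1,…,N}, and suppose the lattice functions u_{i,j,l} : ℝ → ℝ (indices in {0,…,N+1}) are twice differentiable and that u_{m,n,p} satisfies the lattice equation ü_{m,n,p} − c²∇²u_{m,n,p} + μu_{m,n,p} + V′(u_{m,n,p}) − J = β∇²u̇_{m,n,p} − γu̇_{m,n,p} at time t. Define K_{i,j,l} = −c²·u̇_{i,j,l}·(u_{i,j,l} − u_{i−1,j,l}), K′_{i,j,l} = −c²·u̇_{i,j,l}·(u_{i,j,l} − u_{i,j−1,l}), K″_{i,j,l} = −c²·u̇_{i,j,l}·(u_{i,j,l} − u_{i,j,l−1}). Then the node Hamiltonian H_{m,n,p} is differentiable at t with dH_{m,n,p}/dt = (K_{m,n,p} − K_{m+1,n,p}) + (K′_{m,n,p} − K′_{m,n+1,p}) + (K″_{m,n,p} − K″_{m,n,p+1}) + β·(u̇_{m+1,n,p} − 2u̇_{m,n,p} + u̇_{m−1,n,p})·u̇_{m,n,p} + β·(u̇_{m,n+1,p}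 − 2u̇_{m,n,p} + u̇_{m,n−1,p})·u̇_{m,n,p} + β·(u̇_{m,n,p+1} − 2u̇_{m,n,p} + u̇_{m,n,p−1})·u̇_{m,n,p} − γ·(u̇_{m,n,p})². -/
noncomputable section

open Finset

/-- The fluxes `K`, `K′`, `K″` of the lattice. -/
def fluxX (c : ℝ) (u : ℤ → ℤ → ℤ → ℝ → ℝ) (i j l : ℤ) (t : ℝ) : ℝ :=
  -(c ^ 2) * ud u i j l t * (u i j l t - u (i - 1) j l t)

def fluxY (c : ℝ) (u : ℤ → ℤ → ℤ → ℝ → ℝ) (i j l : ℤ) (t : ℝ) : ℝ :=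
  -(c ^ 2) * ud u i j l t * (u i j l t - u i (j - 1) l t)

def fluxZ (c : ℝ) (u : ℤ → ℤ → ℤ → ℝ → ℝ) (i j l : ℤ) (t : ℝ) : ℝ :=
  -(c ^ 2) * ud u i j l t * (u i j l t - u i j (l - 1) t)

/-- Rate of change of the Hamiltonian of an interior lattice node. -/
theorem node_hamiltonian_rate
    (N : ℕ) (hN : 1 ≤ N) (c μ J β γ : ℝ) (hc : 0 < c) (hβ : 0 ≤ β) (hγ : 0 ≤ γ)
    (V : ℝ → ℝ) (hV : ContDiff ℝ 1 V)
    (u : ℤ → ℤ → ℤ → ℝ → ℝ)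
    (hdiff : ∀ i j l : ℤ, i ∈ Icc (0:ℤ) (N + 1) → j ∈ Icc (0:ℤ) (N + 1) →
      l ∈ Icc (0:ℤ) (N + 1) → ∀ s : ℝ,
        DifferentiableAt ℝ (u i j l) s ∧ DifferentiableAt ℝ (deriv (u i j l)) s)
    (m n p : ℤ) (hm : m ∈ Icc (1:ℤ) (N:ℤ)) (hn : n ∈ Icc (1:ℤ) (N:ℤ))
    (hp : p ∈ Icc (1:ℤ) (N:ℤ)) (t : ℝ)
    (heq : deriv (deriv (u m n p)) t - c ^ 2 * dLap u m n p t + μ * u m n p t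
        + deriv V (u m n p t) - J
      = β * dLap (fun i j l s => deriv (u i j l) s) m n p t
        - γ * deriv (u m n p) t) :
    HasDerivAt (fun s => nodeH c μ J V u m n p s)
      ((fluxX c u m n p t - fluxX c u (m + 1) n p t)
        + (fluxY c u m n p t - fluxY c u m (n + 1) p t)
        + (fluxZ c u m n p t - fluxZ c u m n (p + 1) t)
        + β * (ud u (m + 1) n p t - 2 * ud u m n p t + ud u (m - 1) n p t)
            * ud u m n p t
        + β * (ud u m (n + 1) p t - 2 * ud u m n p t + ud u m (n - 1) p t)
            * ud u m n p t
        + β * (ud u m n (p + 1) t - 2 * ud u m n p t + ud u m n (p - 1) t)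
            * ud u m n p t
        - γ * (ud u m n p t) ^ 2)
      t := by
  rw [mem_Icc] at hm hn hp
  have hu := hdiff m n p (by grind) (by grind) (by grind) t
  have h0 := hu.1.hasDerivAt
  have hd := hu.2.hasDerivAt
  have hx := (hdiff (m + 1) n p (by grind) (by grind) (by grind) t).1.hasDerivAt
  have hy := (hdiff m (n + 1) p (by grind) (by grind) (by grind) t).1.hasDerivAt
  have hz := (hdiff m n (p + 1) (by grind) (by grind) (by grind) t).1.hasDerivAt
  have hVu := ((hV.differentiable one_ne_zero) (u m n p t)).hasDerivAt.comp t h0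
  have key := (((((((hd.pow 2).add (((hx.sub h0).pow 2).const_mul (c ^ 2))).add
    (((hy.sub h0).pow 2).const_mul (c ^ 2))).add
    (((hz.sub h0).pow 2).const_mul (c ^ 2))).add
    ((h0.pow 2).const_mul μ)).const_mul ((1 : ℝ) / 2)).add hVu).sub (h0.const_mul J)
  refine HasDerivAt.congr_deriv key ?_
  simp only [dLap] at heq
  simp only [fluxX, fluxY, fluxZ, ud, add_sub_cancel_right, Pi.sub_apply]
  push_cast
  linear_combination deriv (u m n p) t * heq

end
end

section
/- Let N ≥ 1, M ≥ 2, Δt, Δx, Δy, Δz > 0, μ ∈ ℝ, β, γ ≥ 0, J ∈ ℝ, and let V : ℝ → ℝ. Let u^k_{m,n,p} ∈ ℝ be given for k ∈ {0,…,M} and m,n,p ∈ {0,…,N+1}, satisfying for all k ∈ {1,…,M−1} and m,n,p ∈ {1,…,N} the finite-difference scheme in the form multiplied through by δₜu^k_{m,n,p}: [δ²ₜu^k_{m,n,p}/(Δt)² − (δ²ₓ/(Δx)² + δ²ᵧ/(Δy)² + δ²_z/(Δz)²)(u^k_{m,n,p} + (β/(2Δt))·δₜu^k_{m,n,p}) +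 γ·δₜu^k_{m,n,p}/(2Δt) + (μ/2)·(u^{k+1}_{m,n,p} + u^{k−1}_{m,n,p})]·δₜu^k_{m,n,p} + V(u^{k+1}_{m,n,p}) − V(u^{k−1}_{m,n,p}) − J·δₜu^k_{m,n,p} = 0, together with the discrete Neumann conditions u^k_{N+1,n,p} = u^k_{N,n,p}, u^k_{m,N+1,p} = u^k_{m,N,p}, u^k_{m,n,N+1} = u^k_{m,n,N} for all k and all m,n,p ∈ {1,…,N}. Then for every k ∈ {1,…,M−1}, (E^k − E^{k−1})/Δt = {−∑_{i,j=1}^N [(δₓu^k_{0,i,j}/(Δx)²)·(δₜu^k_{0,i,j}/(2Δt)) + (δᵧu^k_{i,0,j}/(Δy)²)·(δₜu^k_{i,0,j}/(2Δt)) + (δ_zu^k_{i,j,0}/(Δz)²)·(δₜu^k_{i,j,0}/(2Δt))] − β·{∑_{m,n,p=1}^N [(δₜₓu^k_{m−1,n,p}/(2ΔxΔt))² + (δₜᵧu^k_{m,n−1,p}/(2ΔyΔt))² + (δₜ_zu^k_{m,n,p−1}/(2ΔzΔt))²] + ∑_{i,j=1}^N [(δₜₓu^k_{0,i,j})·(δₜu^k_{0,i,j})/(2ΔxΔt)²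 + (δₜᵧu^k_{i,0,j})·(δₜu^k_{i,0,j})/(2ΔyΔt)² + (δₜ_zu^k_{i,j,0})·(δₜu^k_{i,j,0})/(2ΔzΔt)²]} − γ·∑_{m,n,p=1}^N (δₜu^k_{m,n,p}/(2Δt))²}·Δυ. -/
noncomputable section

open Finset

/-- δₜu^k = u^{k+1} − u^{k−1}. -/
def dT (u : ℕ → ℤ → ℤ → ℤ → ℝ) (k : ℕ) (m n p : ℤ) : ℝ :=
  u (k + 1) m n p - u (k - 1) m n p

/-- δ²ₜu^k = u^{k+1} − 2u^k + u^{k−1}. -/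
def d2T (u : ℕ → ℤ → ℤ → ℤ → ℝ) (k : ℕ) (m n p : ℤ) : ℝ :=
  u (k + 1) m n p - 2 * u k m n p + u (k - 1) m n p

/-- Forward spatial differences. -/
def dX (u : ℕ → ℤ → ℤ → ℤ → ℝ) (k : ℕ) (m n p : ℤ) : ℝ := u k (m + 1) n p - u k m n p
def dY (u : ℕ → ℤ → ℤ → ℤ → ℝ) (k : ℕ) (m n p : ℤ) : ℝ := u k m (n + 1) p - u k m n p
def dZ (u : ℕ → ℤ → ℤ → ℤ → ℝ) (k : ℕ) (m n p : ℤ) : ℝ := u k m n (p + 1) - u k m n p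

/-- Centered second spatial differences. -/
def d2X (u : ℕ → ℤ → ℤ → ℤ → ℝ) (k : ℕ) (m n p : ℤ) : ℝ :=
  u k (m + 1) n p - 2 * u k m n p + u k (m - 1) n p
def d2Y (u : ℕ → ℤ → ℤ → ℤ → ℝ) (k : ℕ) (m n p : ℤ) : ℝ :=
  u k m (n + 1) p - 2 * u k m n p + u k m (n - 1) p
def d2Z (u : ℕ → ℤ → ℤ → ℤ → ℝ) (k : ℕ) (m n p : ℤ) : ℝ :=
  u k m n (p + 1) - 2 * u k m n p + u k m n (p - 1)

/-- Mixed differences δₜₓ = δₓδₜ, δₜᵧ = δᵧδₜ, δₜ_z = δ_zδₜ. -/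
def dTX (u : ℕ → ℤ → ℤ → ℤ → ℝ) (k : ℕ) (m n p : ℤ) : ℝ :=
  dT u k (m + 1) n p - dT u k m n p
def dTY (u : ℕ → ℤ → ℤ → ℤ → ℝ) (k : ℕ) (m n p : ℤ) : ℝ :=
  dT u k m (n + 1) p - dT u k m n p
def dTZ (u : ℕ → ℤ → ℤ → ℤ → ℝ) (k : ℕ) (m n p : ℤ) : ℝ :=
  dT u k m n (p + 1) - dT u k m n p

/-- The field `u^k + (β/(2Δt))·δₜu^k` to which the spatial operator is applied. -/
def combField (β Δt : ℝ) (u : ℕ → ℤ → ℤ → ℤ → ℝ) : ℕ → ℤ → ℤ → ℤ → ℝ :=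
  fun k m n p => u k m n p + β / (2 * Δt) * dT u k m n p

/-- The discrete node Hamiltonian `H^k_{m,n,p}`. -/
def nodeHd (Δt Δx Δy Δz μ J : ℝ) (V : ℝ → ℝ) (u : ℕ → ℤ → ℤ → ℤ → ℝ)
    (k : ℕ) (m n p : ℤ) : ℝ :=
  (1:ℝ)/2 * ((u (k + 1) m n p - u k m n p) / Δt) ^ 2
    + (1:ℝ)/2 * (dX u (k + 1) m n p * dX u k m n p / Δx ^ 2
        + dY u (k + 1) m n p * dY u k m n p / Δy ^ 2
        + dZ u (k + 1) m n p * dZ u k m n p / Δz ^ 2)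
    + μ / 2 * (((u (k + 1) m n p) ^ 2 + (u k m n p) ^ 2) / 2)
    + (V (u (k + 1) m n p) + V (u k m n p)) / 2
    - J * (u (k + 1) m n p + u k m n p) / 2

/-- The total discrete energy `E^k`. -/
def totEd (N : ℕ) (Δt Δx Δy Δz μ J : ℝ) (V : ℝ → ℝ) (u : ℕ → ℤ → ℤ → ℤ → ℝ)
    (k : ℕ) : ℝ :=
  (∑ m ∈ Icc (1:ℤ) (N:ℤ), ∑ n ∈ Icc (1:ℤ) (N:ℤ), ∑ p ∈ Icc (1:ℤ) (N:ℤ),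
      nodeHd Δt Δx Δy Δz μ J V u k m n p) * (Δx * Δy * Δz)
    + (1:ℝ)/2 * (∑ i ∈ Icc (1:ℤ) (N:ℤ), ∑ j ∈ Icc (1:ℤ) (N:ℤ),
        (dX u (k + 1) 0 i j * dX u k 0 i j / Δx ^ 2
          + dY u (k + 1) i 0 j * dY u k i 0 j / Δy ^ 2
          + dZ u (k + 1) i j 0 * dZ u k i j 0 / Δz ^ 2)) * (Δx * Δy * Δz)

/-- Telescoping of backward differences over `1, …, N`. -/
theorem sum_Icc_sub_pred (F : ℤ → ℝ) (N : ℕ) :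
    ∑ m ∈ Icc (1:ℤ) (N:ℤ), (F m - F (m - 1)) = F N - F 0 := by
  induction N with
  | zero => simp
  | succ N ih =>
    have h : Icc (1:ℤ) ((N + 1 : ℕ) : ℤ) = insert ((N:ℤ) + 1) (Icc (1:ℤ) (N:ℤ)) := by
      ext a
      simp only [mem_Icc, mem_insert]
      omega
    rw [h, sum_insert (by simp), ih]
    push_cast
    rw [add_sub_cancel_right]
    ring

/-- The flux through a node in one coordinate direction, with `d` and `e` the forward
differences of `u^k` and `δₜu^k`, and `w` the value of `δₜu^k`. -/
def nodeFlux (β Δt h d e w : ℝ) : ℝ :=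
  (d * e + d * w + β / (2 * Δt) * e * w) / (2 * Δt * h ^ 2)

/-- The local energy balance: up to a difference of fluxes, the energy of a node changes only
through damping. -/
theorem nodeHd_balance (Δt Δx Δy Δz μ β γ J : ℝ) (V : ℝ → ℝ) (u : ℕ → ℤ → ℤ → ℤ → ℝ)
    (k : ℕ) (m n p : ℤ)
    (hscheme : (d2T u (k + 1) m n p / Δt ^ 2
          - (d2X (combField β Δt u) (k + 1) m n p / Δx ^ 2
              + d2Y (combField β Δt u) (k + 1) m n p / Δy ^ 2
              + d2Z (combField β Δt u) (k + 1) m n p / Δz ^ 2)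
          + γ * dT u (k + 1) m n p / (2 * Δt)
          + μ / 2 * (u (k + 1 + 1) m n p + u (k + 1 - 1) m n p)) * dT u (k + 1) m n p
        + V (u (k + 1 + 1) m n p) - V (u (k + 1 - 1) m n p) - J * dT u (k + 1) m n p = 0) :
    (nodeHd Δt Δx Δy Δz μ J V u (k + 1) m n p - nodeHd Δt Δx Δy Δz μ J V u k m n p) / Δt
      + β * ((dTX u (k + 1) (m - 1) n p / (2 * Δx * Δt)) ^ 2
          + (dTY u (k + 1) m (n - 1) p / (2 * Δy * Δt)) ^ 2
          + (dTZ u (k + 1) m n (p - 1) / (2 * Δz * Δt)) ^ 2)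
      + γ * (dT u (k + 1) m n p / (2 * Δt)) ^ 2
    = (nodeFlux β Δt Δx (dX u (k + 1) m n p) (dTX u (k + 1) m n p) (dT u (k + 1) m n p)
        - nodeFlux β Δt Δx (dX u (k + 1) (m - 1) n p) (dTX u (k + 1) (m - 1) n p)
            (dT u (k + 1) (m - 1) n p))
      + (nodeFlux β Δt Δy (dY u (k + 1) m n p) (dTY u (k + 1) m n p) (dT u (k + 1) m n p)
        - nodeFlux β Δt Δy (dY u (k + 1) m (n - 1) p) (dTY u (k + 1) m (n - 1) p)
            (dT u (k + 1) m (n - 1) p))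
      + (nodeFlux β Δt Δz (dZ u (k + 1) m n p) (dTZ u (k + 1) m n p) (dT u (k + 1) m n p)
        - nodeFlux β Δt Δz (dZ u (k + 1) m n (p - 1)) (dTZ u (k + 1) m n (p - 1))
            (dT u (k + 1) m n (p - 1))) := by
  simp only [nodeFlux, nodeHd, combField, d2T, d2X, d2Y, d2Z, dTX, dTY, dTZ, dT, dX, dY, dZ,
    Nat.add_sub_cancel, sub_add_cancel] at hscheme ⊢
  linear_combination hscheme / (2 * Δt)

/-- A sum of flux differences over the cube reduces to the fluxes through its faces; those through
the far faces are assumed to vanish. -/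
theorem sum_flux_sub_pred (N : ℕ) (F G H : ℤ → ℤ → ℤ → ℝ)
    (hF : ∀ i ∈ Icc (1:ℤ) (N:ℤ), ∀ j ∈ Icc (1:ℤ) (N:ℤ), F N i j = 0)
    (hG : ∀ i ∈ Icc (1:ℤ) (N:ℤ), ∀ j ∈ Icc (1:ℤ) (N:ℤ), G i N j = 0)
    (hH : ∀ i ∈ Icc (1:ℤ) (N:ℤ), ∀ j ∈ Icc (1:ℤ) (N:ℤ), H i j N = 0) :
    ∑ m ∈ Icc (1:ℤ) (N:ℤ), ∑ n ∈ Icc (1:ℤ) (N:ℤ), ∑ p ∈ Icc (1:ℤ) (N:ℤ),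
        ((F m n p - F (m - 1) n p) + (G m n p - G m (n - 1) p) + (H m n p - H m n (p - 1)))
      = -∑ i ∈ Icc (1:ℤ) (N:ℤ), ∑ j ∈ Icc (1:ℤ) (N:ℤ), (F 0 i j + G i 0 j + H i j 0) := by
  have eF : ∑ m ∈ Icc (1:ℤ) (N:ℤ), ∑ n ∈ Icc (1:ℤ) (N:ℤ), ∑ p ∈ Icc (1:ℤ) (N:ℤ),
      (F m n p - F (m - 1) n p)
      = ∑ i ∈ Icc (1:ℤ) (N:ℤ), ∑ j ∈ Icc (1:ℤ) (N:ℤ), -F 0 i j := by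
    rw [sum_comm]
    refine sum_congr rfl fun i hi => ?_
    rw [sum_comm]
    refine sum_congr rfl fun j hj => ?_
    rw [sum_Icc_sub_pred (fun m => F m i j), hF i hi j hj, zero_sub]
  have eG : ∑ m ∈ Icc (1:ℤ) (N:ℤ), ∑ n ∈ Icc (1:ℤ) (N:ℤ), ∑ p ∈ Icc (1:ℤ) (N:ℤ),
      (G m n p - G m (n - 1) p)
      = ∑ i ∈ Icc (1:ℤ) (N:ℤ), ∑ j ∈ Icc (1:ℤ) (N:ℤ), -G i 0 j := by
    refine sum_congr rfl fun i hi => ?_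
    rw [sum_comm]
    refine sum_congr rfl fun j hj => ?_
    rw [sum_Icc_sub_pred (fun n => G i n j), hG i hi j hj, zero_sub]
  have eH : ∑ m ∈ Icc (1:ℤ) (N:ℤ), ∑ n ∈ Icc (1:ℤ) (N:ℤ), ∑ p ∈ Icc (1:ℤ) (N:ℤ),
      (H m n p - H m n (p - 1))
      = ∑ i ∈ Icc (1:ℤ) (N:ℤ), ∑ j ∈ Icc (1:ℤ) (N:ℤ), -H i j 0 := by
    refine sum_congr rfl fun i hi => sum_congr rfl fun j hj => ?_
    rw [sum_Icc_sub_pred (fun p => H i j p), hH i hi j hj, zero_sub]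
  simp only [sum_add_distrib, eF, eG, eH, sum_neg_distrib]
  ring

/-- Discrete rate of change of energy of the finite-difference scheme with
discrete Neumann conditions on the far boundaries. -/
theorem discrete_energy_rate
    (N M : ℕ) (hN : 1 ≤ N) (hM : 2 ≤ M)
    (Δt Δx Δy Δz : ℝ) (hΔt : 0 < Δt) (hΔx : 0 < Δx) (hΔy : 0 < Δy) (hΔz : 0 < Δz)
    (μ β γ J : ℝ) (hβ : 0 ≤ β) (hγ : 0 ≤ γ) (V : ℝ → ℝ)
    (u : ℕ → ℤ → ℤ → ℤ → ℝ)
    (hscheme : ∀ k : ℕ, 1 ≤ k → k ≤ M - 1 → ∀ m n p : ℤ,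
      m ∈ Icc (1:ℤ) (N:ℤ) → n ∈ Icc (1:ℤ) (N:ℤ) → p ∈ Icc (1:ℤ) (N:ℤ) →
      (d2T u k m n p / Δt ^ 2
          - (d2X (combField β Δt u) k m n p / Δx ^ 2
              + d2Y (combField β Δt u) k m n p / Δy ^ 2
              + d2Z (combField β Δt u) k m n p / Δz ^ 2)
          + γ * dT u k m n p / (2 * Δt)
          + μ / 2 * (u (k + 1) m n p + u (k - 1) m n p)) * dT u k m n p
        + V (u (k + 1) m n p) - V (u (k - 1) m n p) - J * dT u k m n p = 0)
    (hneum : ∀ k ≤ M, ∀ m n p : ℤ,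
      m ∈ Icc (1:ℤ) (N:ℤ) → n ∈ Icc (1:ℤ) (N:ℤ) → p ∈ Icc (1:ℤ) (N:ℤ) →
      u k ((N:ℤ) + 1) n p = u k (N:ℤ) n p
        ∧ u k m ((N:ℤ) + 1) p = u k m (N:ℤ) p
        ∧ u k m n ((N:ℤ) + 1) = u k m n (N:ℤ)) :
    ∀ k : ℕ, 1 ≤ k → k ≤ M - 1 →
      (totEd N Δt Δx Δy Δz μ J V u k - totEd N Δt Δx Δy Δz μ J V u (k - 1)) / Δt
        = (-(∑ i ∈ Icc (1:ℤ) (N:ℤ), ∑ j ∈ Icc (1:ℤ) (N:ℤ),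
              (dX u k 0 i j / Δx ^ 2 * (dT u k 0 i j / (2 * Δt))
                + dY u k i 0 j / Δy ^ 2 * (dT u k i 0 j / (2 * Δt))
                + dZ u k i j 0 / Δz ^ 2 * (dT u k i j 0 / (2 * Δt))))
            - β * ((∑ m ∈ Icc (1:ℤ) (N:ℤ), ∑ n ∈ Icc (1:ℤ) (N:ℤ),
                  ∑ p ∈ Icc (1:ℤ) (N:ℤ),
                    ((dTX u k (m - 1) n p / (2 * Δx * Δt)) ^ 2
                      + (dTY u k m (n - 1) p / (2 * Δy * Δt)) ^ 2
                      + (dTZ u k m n (p - 1) / (2 * Δz * Δt)) ^ 2))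
                + (∑ i ∈ Icc (1:ℤ) (N:ℤ), ∑ j ∈ Icc (1:ℤ) (N:ℤ),
                    (dTX u k 0 i j * dT u k 0 i j / (2 * Δx * Δt) ^ 2
                      + dTY u k i 0 j * dT u k i 0 j / (2 * Δy * Δt) ^ 2
                      + dTZ u k i j 0 * dT u k i j 0 / (2 * Δz * Δt) ^ 2)))
            - γ * ∑ m ∈ Icc (1:ℤ) (N:ℤ), ∑ n ∈ Icc (1:ℤ) (N:ℤ),
                ∑ p ∈ Icc (1:ℤ) (N:ℤ), (dT u k m n p / (2 * Δt)) ^ 2)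
          * (Δx * Δy * Δz) := by
  intro k hk hkM
  obtain ⟨k, rfl⟩ : ∃ l, k = l + 1 := ⟨k - 1, by omega⟩
  have one_mem : (1:ℤ) ∈ Icc (1:ℤ) (N:ℤ) := by
    rw [mem_Icc]
    omega
  have balance := sum_congr rfl fun m hm => sum_congr rfl fun n hn => sum_congr rfl fun p hp =>
    nodeHd_balance Δt Δx Δy Δz μ β γ J V u k m n p (hscheme (k + 1) hk hkM m n p hm hn hp)
  have flux := sum_flux_sub_pred N
    (fun m n p => nodeFlux β Δt Δx (dX u (k + 1) m n p) (dTX u (k + 1) m n p) (dT u (k + 1) m n p))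
    (fun m n p => nodeFlux β Δt Δy (dY u (k + 1) m n p) (dTY u (k + 1) m n p) (dT u (k + 1) m n p))
    (fun m n p => nodeFlux β Δt Δz (dZ u (k + 1) m n p) (dTZ u (k + 1) m n p) (dT u (k + 1) m n p))
    (fun i hi j hj => by
      have h (l : ℕ) (hl : l ≤ M) := (hneum l hl 1 i j one_mem hi hj).1
      simp [nodeFlux, dX, dTX, dT, h k (by omega), h (k + 1) (by omega), h (k + 1 + 1) (by omega)])
    (fun i hi j hj => by
      have h (l : ℕ) (hl : l ≤ M) := (hneum l hl i 1 j hi one_mem hj).2.1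
      simp [nodeFlux, dY, dTY, dT, h k (by omega), h (k + 1) (by omega), h (k + 1 + 1) (by omega)])
    (fun i hi j hj => by
      have h (l : ℕ) (hl : l ≤ M) := (hneum l hl i j 1 hi hj one_mem).2.2
      simp [nodeFlux, dZ, dTZ, dT, h k (by omega), h (k + 1) (by omega), h (k + 1 + 1) (by omega)])
  have face (i j : ℤ) :
      nodeFlux β Δt Δx (dX u (k + 1) 0 i j) (dTX u (k + 1) 0 i j) (dT u (k + 1) 0 i j)
        + nodeFlux β Δt Δy (dY u (k + 1) i 0 j) (dTY u (k + 1) i 0 j) (dT u (k + 1) i 0 j)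
        + nodeFlux β Δt Δz (dZ u (k + 1) i j 0) (dTZ u (k + 1) i j 0) (dT u (k + 1) i j 0)
      = ((dX u (k + 1 + 1) 0 i j * dX u (k + 1) 0 i j / Δx ^ 2
            + dY u (k + 1 + 1) i 0 j * dY u (k + 1) i 0 j / Δy ^ 2
            + dZ u (k + 1 + 1) i j 0 * dZ u (k + 1) i j 0 / Δz ^ 2)
          - (dX u (k + 1) 0 i j * dX u k 0 i j / Δx ^ 2
            + dY u (k + 1) i 0 j * dY u k i 0 j / Δy ^ 2
            + dZ u (k + 1) i j 0 * dZ u k i j 0 / Δz ^ 2)) / (2 * Δt)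
        + (dX u (k + 1) 0 i j / Δx ^ 2 * (dT u (k + 1) 0 i j / (2 * Δt))
            + dY u (k + 1) i 0 j / Δy ^ 2 * (dT u (k + 1) i 0 j / (2 * Δt))
            + dZ u (k + 1) i j 0 / Δz ^ 2 * (dT u (k + 1) i j 0 / (2 * Δt)))
        + β * (dTX u (k + 1) 0 i j * dT u (k + 1) 0 i j / (2 * Δx * Δt) ^ 2
            + dTY u (k + 1) i 0 j * dT u (k + 1) i 0 j / (2 * Δy * Δt) ^ 2
            + dTZ u (k + 1) i j 0 * dT u (k + 1) i j 0 / (2 * Δz * Δt) ^ 2) := by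
    simp only [nodeFlux, dTX, dTY, dTZ, dT, dX, dY, dZ, Nat.add_sub_cancel]
    ring
  have total := balance.trans flux
  simp only [face] at total
  simp only [totEd, Nat.add_sub_cancel]
  have split (f g h : ℤ → ℤ → ℤ → ℝ) (s : Finset ℤ) :
      ∑ m ∈ s, ∑ n ∈ s, ∑ p ∈ s, (f m n p + β * g m n p + γ * h m n p)
        = ∑ m ∈ s, ∑ n ∈ s, ∑ p ∈ s, f m n p + β * ∑ m ∈ s, ∑ n ∈ s, ∑ p ∈ s, g m n p
          + γ * ∑ m ∈ s, ∑ n ∈ s, ∑ p ∈ s, h m n p := by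
    simp only [sum_add_distrib, mul_sum]
  have split_div (f g : ℤ → ℤ → ℤ → ℝ) (s : Finset ℤ) :
      ∑ m ∈ s, ∑ n ∈ s, ∑ p ∈ s, (f m n p - g m n p) / Δt
        = (∑ m ∈ s, ∑ n ∈ s, ∑ p ∈ s, f m n p - ∑ m ∈ s, ∑ n ∈ s, ∑ p ∈ s, g m n p) / Δt := by
    simp only [← sum_sub_distrib, sum_div]
  have split_face (f f' g h : ℤ → ℤ → ℝ) (s : Finset ℤ) :
      ∑ i ∈ s, ∑ j ∈ s, ((f i j - f' i j) / (2 * Δt) + g i j + β * h i j)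
        = (∑ i ∈ s, ∑ j ∈ s, f i j - ∑ i ∈ s, ∑ j ∈ s, f' i j) / (2 * Δt)
          + ∑ i ∈ s, ∑ j ∈ s, g i j + β * ∑ i ∈ s, ∑ j ∈ s, h i j := by
    simp only [sum_add_distrib, ← sum_sub_distrib, sum_div, mul_sum]
  rw [split, split_div, split_face] at total
  linear_combination (Δx * Δy * Δz) * total

end
end

section
/- Let N ≥ 1, M ≥ 2, Δt, Δx, Δy, Δz > 0, μ ∈ ℝ, J ∈ ℝ, V : ℝ → ℝ, and let u^k_{m,n,p} ∈ ℝ (k ∈ {0,…,M}, m,n,p ∈ {0,…,N+1}) satisfy, for all k ∈ {1,…,M−1} and m,n,p ∈ {1,…,N}, the conservative scheme (β = γ = 0) in multiplied form: [δ²ₜu^k_{m,n,p}/(Δt)² − (δ²ₓ/(Δx)² + δ²ᵧ/(Δy)² + δ²_z/(Δz)²)u^k_{m,n,p} + (μ/2)(u^{k+1}_{m,n,p} + u^{k−1}_{m,n,p})]·δₜu^k_{m,n,p} + V(u^{k+1}_{m,n,p}) − V(u^{k−1}_{m,n,p}) − J·δₜu^k_{m,n,p} = 0, together with the discrete Neumann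 conditions u^k_{N+1,n,p} = u^k_{N,n,p}, u^k_{m,N+1,p} = u^k_{m,N,p}, u^k_{m,n,N+1} = u^k_{m,n,N}, and with time-independent Dirichlet boundary data: u^{k+1}_{0,i,j} = u^{k−1}_{0,i,j}, u^{k+1}_{i,0,j} = u^{k−1}_{i,0,j}, u^{k+1}_{i,j,0} = u^{k−1}_{i,j,0} for all i,j ∈ {1,…,N} and all k ∈ {1,…,M−1}. Then the discrete total energy is conserved: E^k = E^{k−1} for every k ∈ {1,…,M−1}. -/
noncomputable section

open Finset

/-- Telescoping sum over an integer interval starting at `1`. -/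
theorem sum_Icc_one_int_sub (f : ℤ → ℝ) (N : ℕ) :
    ∑ m ∈ Icc (1:ℤ) (N:ℤ), (f (m + 1) - f m) = f ((N:ℤ) + 1) - f 1 := by
  induction N with
  | zero => simp
  | succ N ih =>
    have h : Icc (1:ℤ) ((N + 1 : ℕ) : ℤ) = insert ((N:ℤ) + 1) (Icc (1:ℤ) (N:ℤ)) := by
      ext x
      simp only [mem_Icc, mem_insert]
      omega
    rw [h, sum_insert (by simp), ih]
    push_cast
    ring

/-- The part of the change of the node energy along one axis, after using the scheme:
`δu^{k+1} δu^k - δu^k δu^{k-1} + δ²u^k (u^{k+1} - u^{k-1})`, where `a`, `b`, `c` are the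
restrictions of `u^{k+1}`, `u^k`, `u^{k-1}` to the axis. -/
def axisDefect (a b c : ℤ → ℝ) (m : ℤ) : ℝ :=
  (a (m + 1) - a m) * (b (m + 1) - b m) - (b (m + 1) - b m) * (c (m + 1) - c m)
    + (b (m + 1) - 2 * b m + b (m - 1)) * (a m - c m)

/-- Summation by parts in one dimension, for `b` with vanishing difference at the right end and
`a - c` vanishing at the left end. -/
theorem sum_by_parts_neumann_dirichlet (a b c : ℤ → ℝ) (N : ℕ)
    (hb : b ((N:ℤ) + 1) = b (N:ℤ)) (hac : a 0 = c 0) :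
    ∑ m ∈ Icc (1:ℤ) (N:ℤ), axisDefect a b c m
      + ((a (0 + 1) - a 0) * (b (0 + 1) - b 0) - (b (0 + 1) - b 0) * (c (0 + 1) - c 0)) = 0 := by
  have h := sum_Icc_one_int_sub (fun m => (b m - b (m - 1)) * (a m - c m)) N
  simp only [add_sub_cancel_right, sub_self, zero_add, hb, zero_mul] at h ⊢
  rw [sum_congr rfl (g := fun m => (b (m + 1) - b m) * (a (m + 1) - c (m + 1))
      - (b m - b (m - 1)) * (a m - c m)) (fun m _ => by simp only [axisDefect]; ring), h, hac]
  ring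

/-- The conservative scheme (`β = γ = 0`) with discrete Neumann far boundaries and
time-independent Dirichlet boundary data conserves the discrete total energy. -/
theorem discrete_energy_conservation
    (N M : ℕ) (hN : 1 ≤ N) (hM : 2 ≤ M)
    (Δt Δx Δy Δz : ℝ) (hΔt : 0 < Δt) (hΔx : 0 < Δx) (hΔy : 0 < Δy) (hΔz : 0 < Δz)
    (μ J : ℝ) (V : ℝ → ℝ)
    (u : ℕ → ℤ → ℤ → ℤ → ℝ)
    (hscheme : ∀ k : ℕ, 1 ≤ k → k ≤ M - 1 → ∀ m n p : ℤ,
      m ∈ Icc (1:ℤ) (N:ℤ) → n ∈ Icc (1:ℤ) (N:ℤ) → p ∈ Icc (1:ℤ) (N:ℤ) →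
      (d2T u k m n p / Δt ^ 2
          - (d2X u k m n p / Δx ^ 2 + d2Y u k m n p / Δy ^ 2
              + d2Z u k m n p / Δz ^ 2)
          + μ / 2 * (u (k + 1) m n p + u (k - 1) m n p)) * dT u k m n p
        + V (u (k + 1) m n p) - V (u (k - 1) m n p) - J * dT u k m n p = 0)
    (hneum : ∀ k ≤ M, ∀ m n p : ℤ,
      m ∈ Icc (1:ℤ) (N:ℤ) → n ∈ Icc (1:ℤ) (N:ℤ) → p ∈ Icc (1:ℤ) (N:ℤ) →
      u k ((N:ℤ) + 1) n p = u k (N:ℤ) n p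
        ∧ u k m ((N:ℤ) + 1) p = u k m (N:ℤ) p
        ∧ u k m n ((N:ℤ) + 1) = u k m n (N:ℤ))
    (hdir : ∀ k : ℕ, 1 ≤ k → k ≤ M - 1 → ∀ i j : ℤ,
      i ∈ Icc (1:ℤ) (N:ℤ) → j ∈ Icc (1:ℤ) (N:ℤ) →
      u (k + 1) 0 i j = u (k - 1) 0 i j
        ∧ u (k + 1) i 0 j = u (k - 1) i 0 j
        ∧ u (k + 1) i j 0 = u (k - 1) i j 0) :
    ∀ k : ℕ, 1 ≤ k → k ≤ M - 1 →
      totEd N Δt Δx Δy Δz μ J V u k = totEd N Δt Δx Δy Δz μ J V u (k - 1) := by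
  intro k hk hkM
  obtain ⟨k, rfl⟩ : ∃ l, k = l + 1 := ⟨k - 1, by omega⟩
  have hs := hscheme (k + 1) hk hkM
  have hd := hdir (k + 1) hk hkM
  have hn := hneum (k + 1) (by omega)
  simp only [Nat.add_sub_cancel] at hs hd ⊢
  set I := Icc (1:ℤ) (N:ℤ) with hI
  have h1 : (1:ℤ) ∈ I := by simp [hI]; omega
  set X : ℤ → ℤ → ℤ → ℝ := fun m n p => axisDefect (fun i => u (k + 1 + 1) i n p)
    (fun i => u (k + 1) i n p) (fun i => u k i n p) m with hX
  set Y : ℤ → ℤ → ℤ → ℝ := fun m n p => axisDefect (fun i => u (k + 1 + 1) m i p)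
    (fun i => u (k + 1) m i p) (fun i => u k m i p) n with hY
  set Z : ℤ → ℤ → ℤ → ℝ := fun m n p => axisDefect (fun i => u (k + 1 + 1) m n i)
    (fun i => u (k + 1) m n i) (fun i => u k m n i) p with hZ
  have node : ∀ m ∈ I, ∀ n ∈ I, ∀ p ∈ I,
      nodeHd Δt Δx Δy Δz μ J V u (k + 1) m n p = nodeHd Δt Δx Δy Δz μ J V u k m n p
        + (1 / 2 * (X m n p / Δx ^ 2) + 1 / 2 * (Y m n p / Δy ^ 2)
          + 1 / 2 * (Z m n p / Δz ^ 2)) := by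
    intro m hm n hn p hp
    have h := hs m n p hm hn hp
    simp only [dT, d2T, d2X, d2Y, d2Z, Nat.add_sub_cancel] at h
    simp only [nodeHd, dX, dY, dZ, hX, hY, hZ, axisDefect]
    linear_combination h / 2
  have hXsum : ∀ n ∈ I, ∀ p ∈ I, ∑ m ∈ I, X m n p
      = dX u (k + 1) 0 n p * dX u k 0 n p - dX u (k + 1 + 1) 0 n p * dX u (k + 1) 0 n p := by
    intro n hn' p hp
    have h := sum_by_parts_neumann_dirichlet (fun i => u (k + 1 + 1) i n p)
      (fun i => u (k + 1) i n p) (fun i => u k i n p) N (hn 1 n p h1 hn' hp).1 (hd n p hn' hp).1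
    simp only [hX, dX]
    linear_combination h
  have hYsum : ∀ m ∈ I, ∀ p ∈ I, ∑ n ∈ I, Y m n p
      = dY u (k + 1) m 0 p * dY u k m 0 p - dY u (k + 1 + 1) m 0 p * dY u (k + 1) m 0 p := by
    intro m hm p hp
    have h := sum_by_parts_neumann_dirichlet (fun i => u (k + 1 + 1) m i p)
      (fun i => u (k + 1) m i p) (fun i => u k m i p) N (hn m 1 p hm h1 hp).2.1 (hd m p hm hp).2.1
    simp only [hY, dY]
    linear_combination h
  have hZsum : ∀ m ∈ I, ∀ n ∈ I, ∑ p ∈ I, Z m n p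
      = dZ u (k + 1) m n 0 * dZ u k m n 0 - dZ u (k + 1 + 1) m n 0 * dZ u (k + 1) m n 0 := by
    intro m hm n hn'
    have h := sum_by_parts_neumann_dirichlet (fun i => u (k + 1 + 1) m n i)
      (fun i => u (k + 1) m n i) (fun i => u k m n i) N (hn m n 1 hm hn' h1).2.2 (hd m n hm hn').2.2
    simp only [hZ, dZ]
    linear_combination h
  have hX3 : ∑ m ∈ I, ∑ n ∈ I, ∑ p ∈ I, X m n p = ∑ n ∈ I, ∑ p ∈ I,
      (dX u (k + 1) 0 n p * dX u k 0 n p - dX u (k + 1 + 1) 0 n p * dX u (k + 1) 0 n p) := by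
    rw [sum_comm]
    refine sum_congr rfl fun n hn' => ?_
    rw [sum_comm]
    exact sum_congr rfl fun p hp => hXsum n hn' p hp
  have hY3 : ∑ m ∈ I, ∑ n ∈ I, ∑ p ∈ I, Y m n p = ∑ m ∈ I, ∑ p ∈ I,
      (dY u (k + 1) m 0 p * dY u k m 0 p - dY u (k + 1 + 1) m 0 p * dY u (k + 1) m 0 p) := by
    refine sum_congr rfl fun m hm => ?_
    rw [sum_comm]
    exact sum_congr rfl fun p hp => hYsum m hm p hp
  have hZ3 : ∑ m ∈ I, ∑ n ∈ I, ∑ p ∈ I, Z m n p = ∑ m ∈ I, ∑ n ∈ I,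
      (dZ u (k + 1) m n 0 * dZ u k m n 0 - dZ u (k + 1 + 1) m n 0 * dZ u (k + 1) m n 0) :=
    sum_congr rfl fun m hm => sum_congr rfl fun n hn' => hZsum m hm n hn'
  have total : ∑ m ∈ I, ∑ n ∈ I, ∑ p ∈ I, nodeHd Δt Δx Δy Δz μ J V u (k + 1) m n p
      = ∑ m ∈ I, ∑ n ∈ I, ∑ p ∈ I, (nodeHd Δt Δx Δy Δz μ J V u k m n p
        + (1 / 2 * (X m n p / Δx ^ 2) + 1 / 2 * (Y m n p / Δy ^ 2)
          + 1 / 2 * (Z m n p / Δz ^ 2))) :=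
    sum_congr rfl fun m hm => sum_congr rfl fun n hn' => sum_congr rfl fun p hp =>
      node m hm n hn' p hp
  simp only [sum_add_distrib, ← mul_sum, ← sum_div, hX3, hY3, hZ3, sum_sub_distrib] at total
  simp only [totEd, ← hI, total, sum_add_distrib, ← sum_div]
  ring

end
end
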